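/- (Optimal transport with binary cost) Let X and Y be Polish spaces, μ and ν Borel probability measures on X and Y, and Γ a non-empty open subset of X × Y. Then inf_{π ∈ M(μ,ν)} π(Γ) = sup over closed subsets A of X of [ μ(A) − ν(A^Γ) ], where A^Γ = { y ∈ Y : there exists x ∈ A with (x,y) ∉ Γ }. -/

import Mathlib

open MeasureTheory Set

/-- A coupling of `(μ, ν)`: a measure on the product whose marginals are `μ` and `ν`. -/
def IsCoupling {X Y : Type*} [MeasurableSpace X] [MeasurableSpace Y]
    (π : Measure (X × Y)) (μ : Measure X) (ν : Measure Y) : Prop :=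
  π.map Prod.fst = μ ∧ π.map Prod.snd = ν

/-!
The couplings satisfy `μ A ≤ π Γ + ν A^Γ` because `A × Y ⊆ Γ ∪ X × A^Γ`; this is the easy
inequality.

For the other one, let `s` be the supremum and `F = Γᶜ`, so that `μ A ≤ ν (F.image A) + s` for all
closed `A`. Approximating the identities of `X` and `Y` by simple functions turns this, up to a
small error, into the hypothesis of a Hall-type theorem with defect `s` for finitely supported
measures and a small thickening of `F`. The resulting plan is spread over `X × Y` along conditional
measures and completed to a coupling, which gives a thickening of `F` mass at least `1 - s`, up to
the error. Since the set of couplings is compact and mass on closed sets is upper semicontinuous,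
some coupling gives `F` itself mass at least `1 - s`.
-/

open Filter ProbabilityTheory Topology
open scoped Finset NNReal ENNReal

/-- A partial transport plan of supplies `a` to demands `b` along the relation `R`: `c i j` is the
amount moved from `i` to `j`, and neither supplies nor demands need be exhausted. -/
structure IsPartialPlan {ι κ M : Type*} [Fintype ι] [Fintype κ] [AddCommMonoid M] [LE M]
    (R : SetRel ι κ) (a : ι → M) (b : κ → M) (c : ι → κ → M) : Prop where
  mem_of_ne_zero : ∀ i j, c i j ≠ 0 → (i, j) ∈ R
  sum_row_le : ∀ i, ∑ j, c i j ≤ a i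
  sum_col_le : ∀ j, ∑ i, c i j ≤ b j

section PartialPlan

variable {ι κ : Type*} [Fintype ι] [Fintype κ] {R : SetRel ι κ}

lemma IsPartialPlan.map {M N : Type*} [AddCommMonoid M] [Preorder M] [AddCommMonoid N]
    [Preorder N] {a : ι → M} {b : κ → M} {c : ι → κ → M} (hc : IsPartialPlan R a b c)
    (φ : M →+ N) (hφ : Monotone φ) :
    IsPartialPlan R (fun i ↦ φ (a i)) (fun j ↦ φ (b j)) (fun i j ↦ φ (c i j)) where
  mem_of_ne_zero i j h := hc.mem_of_ne_zero i j fun h0 ↦ h (by rw [h0, map_zero])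
  sum_row_le i := (map_sum φ _ _).symm.trans_le (hφ (hc.sum_row_le i))
  sum_col_le j := (map_sum φ _ _).symm.trans_le (hφ (hc.sum_col_le j))

lemma IsPartialPlan.mono {M : Type*} [AddCommMonoid M] [Preorder M] {a a' : ι → M} {b b' : κ → M}
    {c : ι → κ → M} (hc : IsPartialPlan R a b c) (ha : a ≤ a') (hb : b ≤ b') :
    IsPartialPlan R a' b' c where
  mem_of_ne_zero := hc.mem_of_ne_zero
  sum_row_le i := (hc.sum_row_le i).trans (ha i)
  sum_col_le j := (hc.sum_col_le j).trans (hb j)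

open scoped Classical in
/-- The `d` extra vertices related to everything absorb the defect. -/
lemma exists_matching_card_add {α β : Type*} [Fintype α] [Fintype β] (R : SetRel α β) (d : ℕ)
    (h : ∀ A : Finset α, #A ≤ #{b | b ∈ R.image A} + d) :
    ∃ M : Finset (α × β), (M : Set (α × β)) ⊆ R ∧ InjOn Prod.fst (M : Set (α × β)) ∧
      InjOn Prod.snd (M : Set (α × β)) ∧ Fintype.card α ≤ #M + d := by
  let r : α → β ⊕ Fin d → Prop := fun a ↦ Sum.elim (fun b ↦ (a, b) ∈ R) fun _ ↦ True
  have hall : ∀ A : Finset α, #A ≤ #{w | ∃ a ∈ A, r a w} := by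
    intro A
    rcases A.eq_empty_or_nonempty with rfl | ⟨a₀, ha₀⟩
    · simp
    calc #A ≤ #{b | b ∈ R.image A} + d := h A
      _ = #(({b | b ∈ R.image A} : Finset β).disjSum (Finset.univ : Finset (Fin d))) := by simp
      _ ≤ #{w | ∃ a ∈ A, r a w} := Finset.card_le_card fun w hw ↦ by
        rcases w with b | k
        · simpa [r] using hw
        · simpa [r] using ⟨a₀, ha₀⟩
  obtain ⟨f, hf, hfr⟩ := (Fintype.all_card_le_filter_rel_iff_exists_injective r).1 hall
  refine ⟨({p | f p.1 = .inl p.2} : Finset (α × β)), ?_, ?_, ?_, ?_⟩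
  · rintro ⟨a, b⟩ hab
    have hab : f a = .inl b := by simpa using hab
    simpa [r, hab] using hfr a
  · rintro ⟨a, b⟩ hab ⟨a', b'⟩ hab' (rfl : a = a')
    simp_all
  · rintro ⟨a, b⟩ hab ⟨a', b'⟩ hab' (rfl : b = b')
    simp only [Finset.coe_filter, Finset.mem_univ, true_and, mem_ofPred_eq] at hab hab'
    rw [hf (hab.trans hab'.symm)]
  · set M : Finset (α × β) := {p | f p.1 = .inl p.2}
    have hsub : Finset.univ.image f ⊆ (M.image Prod.snd).disjSum Finset.univ := by
      intro w hw
      obtain ⟨a, -, rfl⟩ := Finset.mem_image.1 hw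
      rcases hfa : f a with b | k
      · simpa [M] using ⟨a, hfa⟩
      · simp
    calc Fintype.card α = #(Finset.univ.image f) := by
          rw [Finset.card_image_of_injective _ hf, Finset.card_univ]
      _ ≤ #(M.image Prod.snd) + d := (Finset.card_le_card hsub).trans_eq (by simp)
      _ ≤ #M + d := by gcongr; exact Finset.card_image_le

open scoped Classical in
lemma isPartialPlan_card_of_injOn {α β : Type*} [Fintype α] [Fintype β] (u : α → ι) (v : β → κ)
    {M : Finset (α × β)} (hMR : ∀ p ∈ M, (u p.1, v p.2) ∈ R)
    (hfst : InjOn Prod.fst (M : Set (α × β))) (hsnd : InjOn Prod.snd (M : Set (α × β))) :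
    IsPartialPlan R (fun i ↦ #{x | u x = i}) (fun j ↦ #{y | v y = j})
      (fun i j ↦ #{p ∈ M | u p.1 = i ∧ v p.2 = j}) where
  mem_of_ne_zero i j hij := by
    obtain ⟨p, hp⟩ := Finset.card_ne_zero.1 hij
    obtain ⟨hpM, rfl, rfl⟩ := Finset.mem_filter.1 hp
    exact hMR p hpM
  sum_row_le i := by
    calc ∑ j, #{p ∈ M | u p.1 = i ∧ v p.2 = j} = #{p ∈ M | u p.1 = i} := by
          simp only [← Finset.filter_filter]
          exact (Finset.card_eq_sum_card_fiberwise fun _ _ ↦ by simp).symm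
      _ ≤ #{x | u x = i} := Finset.card_le_card_of_injOn Prod.fst (fun p hp ↦ by simp_all)
          (hfst.mono (Finset.coe_subset.2 (Finset.filter_subset _ _)))
  sum_col_le j := by
    calc ∑ i, #{p ∈ M | u p.1 = i ∧ v p.2 = j} = #{p ∈ M | v p.2 = j} := by
          simp only [and_comm (b := v _ = j), ← Finset.filter_filter]
          exact (Finset.card_eq_sum_card_fiberwise fun _ _ ↦ by simp).symm
      _ ≤ #{y | v y = j} := Finset.card_le_card_of_injOn Prod.snd (fun p hp ↦ by simp_all)
          (hsnd.mono (Finset.coe_subset.2 (Finset.filter_subset _ _)))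

open scoped Classical in
lemma card_filter_sigma_fst_eq {ι : Type*} [Fintype ι] (σ : ι → Type*)
    [∀ i, Fintype (σ i)] (i : ι) : #{x : Σ i, σ i | x.1 = i} = Fintype.card (σ i) := by
  rw [← Fintype.card_subtype, Fintype.card_congr (Equiv.sigmaSubtype i)]

/-- Replace `i` by `a i` copies and `j` by `b j` copies, and count matched pairs. -/
lemma exists_isPartialPlan_nat (a : ι → ℕ) (b : κ → ℕ) (d : ℕ)
    (h : ∀ I : Finset ι, ∃ J : Finset κ, (J : Set κ) ⊆ R.image I ∧
      ∑ i ∈ I, a i ≤ ∑ j ∈ J, b j + d) :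
    ∃ c : ι → κ → ℕ, IsPartialPlan R a b c ∧ ∑ i, a i ≤ ∑ i, ∑ j, c i j + d := by
  classical
  let S : SetRel (Σ i, Fin (a i)) (Σ j, Fin (b j)) := {p | (p.1.1, p.2.1) ∈ R}
  obtain ⟨M, hMS, hfst, hsnd, hcard⟩ := exists_matching_card_add S d fun A ↦ by
    obtain ⟨J, hJ, hIJ⟩ := h (A.image Sigma.fst)
    calc #A ≤ #((A.image Sigma.fst).sigma fun i ↦ (Finset.univ : Finset (Fin (a i)))) :=
          Finset.card_le_card fun v hv ↦ by simpa using ⟨v.2, hv⟩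
      _ ≤ #(J.sigma fun j ↦ (Finset.univ : Finset (Fin (b j)))) + d := by simpa using hIJ
      _ ≤ #{w | w ∈ S.image A} + d := by
        gcongr
        intro w hw
        obtain ⟨i, hi, hiR⟩ := hJ (Finset.mem_sigma.1 hw).1
        obtain ⟨v, hv, rfl⟩ := Finset.mem_image.1 hi
        exact Finset.mem_filter.2 ⟨Finset.mem_univ _, v, hv, hiR⟩
  have hc := isPartialPlan_card_of_injOn (R := R) Sigma.fst Sigma.fst (fun _ hp ↦ hMS hp) hfst hsnd
  simp only [card_filter_sigma_fst_eq, Fintype.card_fin] at hc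
  refine ⟨_, hc, ?_⟩
  calc ∑ i, a i = Fintype.card (Σ i, Fin (a i)) := by simp
    _ ≤ #M + d := hcard
    _ = ∑ i, ∑ j, #{p ∈ M | p.1.1 = i ∧ p.2.1 = j} + d := by
      rw [← Fintype.sum_prod_type', Finset.card_eq_sum_card_fiberwise
        (f := fun p ↦ (p.1.1, p.2.1)) (t := Finset.univ) fun _ _ ↦ by simp]
      simp only [Prod.ext_iff]

lemma sum_le_sum_floor_add_card {α K : Type*} [Semiring K] [LinearOrder K] [IsOrderedRing K]
    [FloorSemiring K] (s : Finset α) (f : α → K) :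
    ∑ i ∈ s, f i ≤ (∑ i ∈ s, ⌊f i⌋₊ : ℕ) + #s :=
  calc ∑ i ∈ s, f i ≤ ∑ i ∈ s, ((⌊f i⌋₊ : K) + 1) := by
        gcongr
        exact (Nat.lt_floor_add_one _).le
    _ = (∑ i ∈ s, ⌊f i⌋₊ : ℕ) + #s := by simp [Finset.sum_add_distrib]

/-- Multiply by a large `N` and round to integers. -/
lemma exists_isPartialPlan_nnreal (p : ι → ℝ≥0) (q : κ → ℝ≥0) (t : ℝ≥0)
    (h : ∀ I : Finset ι, ∃ J : Finset κ, (J : Set κ) ⊆ R.image I ∧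
      ∑ i ∈ I, p i ≤ ∑ j ∈ J, q j + t) {ε : ℝ≥0} (hε : 0 < ε) :
    ∃ c : ι → κ → ℝ≥0, IsPartialPlan R p q c ∧ ∑ i, p i ≤ ∑ i, ∑ j, c i j + t + ε := by
  obtain ⟨N, hN⟩ := exists_nat_gt ((Fintype.card ι + Fintype.card κ + 1) / ε)
  have hN0 : (0 : ℝ≥0) < N := pos_of_gt hN
  rw [div_lt_iff₀ hε] at hN
  obtain ⟨c, hc, hsum⟩ := exists_isPartialPlan_nat (R := R) (fun i ↦ ⌊N * p i⌋₊)
    (fun j ↦ ⌊N * q j⌋₊) (⌈N * t⌉₊ + Fintype.card κ) fun I ↦ by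
    obtain ⟨J, hJ, hIJ⟩ := h I
    refine ⟨J, hJ, ?_⟩
    rw [← Nat.cast_le (α := ℝ≥0)]
    push_cast
    calc ∑ i ∈ I, (⌊N * p i⌋₊ : ℝ≥0) ≤ ∑ i ∈ I, N * p i := by
          gcongr; exact Nat.floor_le zero_le
      _ ≤ N * (∑ j ∈ J, q j + t) := by rw [← Finset.mul_sum]; gcongr
      _ = ∑ j ∈ J, N * q j + N * t := by rw [mul_add, Finset.mul_sum]
      _ ≤ (∑ j ∈ J, ⌊N * q j⌋₊ : ℕ) + #J + ⌈N * t⌉₊ := by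
          gcongr
          · exact sum_le_sum_floor_add_card J _
          · exact Nat.le_ceil _
      _ ≤ (∑ j ∈ J, ⌊N * q j⌋₊ : ℕ) + Fintype.card κ + ⌈N * t⌉₊ := by
          gcongr; exact Finset.card_le_univ J
      _ = ∑ j ∈ J, (⌊N * q j⌋₊ : ℝ≥0) + (⌈N * t⌉₊ + Fintype.card κ) := by push_cast; ring
  have div_floor_le (x : ℝ≥0) : (N : ℝ≥0)⁻¹ * ⌊N * x⌋₊ ≤ x :=
    (inv_mul_le_iff₀ hN0).2 (Nat.floor_le zero_le)
  let φ : ℕ →+ ℝ≥0 := (AddMonoidHom.mulLeft (N : ℝ≥0)⁻¹).comp (Nat.castAddMonoidHom ℝ≥0)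
  have hφ : Monotone φ := fun m n hmn ↦ mul_le_mul_of_nonneg_left (Nat.cast_le.2 hmn) zero_le
  refine ⟨_, (hc.map φ hφ).mono (fun i ↦ div_floor_le (p i)) (fun j ↦ div_floor_le (q j)), ?_⟩
  rw [← mul_le_mul_iff_right₀ hN0]
  calc N * ∑ i, p i ≤ (∑ i, ⌊N * p i⌋₊ : ℕ) + Fintype.card ι := by
        rw [Finset.mul_sum]; exact sum_le_sum_floor_add_card Finset.univ _
    _ ≤ ((∑ i, ∑ j, c i j + (⌈N * t⌉₊ + Fintype.card κ) : ℕ) : ℝ≥0) + Fintype.card ι := by gcongr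
    _ ≤ ∑ i, ∑ j, (c i j : ℝ≥0) + (N * t + 1 + Fintype.card κ) + Fintype.card ι := by
        push_cast; gcongr; exact (Nat.ceil_lt_add_one zero_le).le
    _ = ∑ i, ∑ j, (c i j : ℝ≥0) + N * t + (Fintype.card ι + Fintype.card κ + 1) := by ring
    _ ≤ ∑ i, ∑ j, (c i j : ℝ≥0) + N * t + N * ε := by gcongr
    _ = N * (∑ i, ∑ j, φ (c i j) + t + ε) := by
        simp [φ, mul_add, ← Finset.mul_sum, mul_inv_cancel_left₀ hN0.ne']

end PartialPlan

namespace IsCoupling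

variable {X Y : Type*} [MeasurableSpace X] [MeasurableSpace Y] {μ μ' : Measure X}
  {ν ν' : Measure Y} {π π' : Measure (X × Y)}

lemma measure_preimage_fst (hπ : IsCoupling π μ ν) {A : Set X} (hA : MeasurableSet A) :
    π (Prod.fst ⁻¹' A) = μ A := by
  rw [← hπ.1, Measure.map_apply measurable_fst hA]

lemma measure_preimage_fst_le (hπ : IsCoupling π μ ν) (A : Set X) :
    π (Prod.fst ⁻¹' A) ≤ μ A :=
  hπ.1 ▸ Measure.le_map_apply measurable_fst.aemeasurable A

lemma measure_preimage_snd_le (hπ : IsCoupling π μ ν) (B : Set Y) :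
    π (Prod.snd ⁻¹' B) ≤ ν B :=
  hπ.2 ▸ Measure.le_map_apply measurable_snd.aemeasurable B

lemma measure_univ_eq (hπ : IsCoupling π μ ν) : π univ = μ univ := by
  rw [← hπ.measure_preimage_fst .univ, preimage_univ]

lemma isFiniteMeasure [IsFiniteMeasure μ] (hπ : IsCoupling π μ ν) : IsFiniteMeasure π :=
  ⟨hπ.measure_univ_eq ▸ measure_lt_top μ univ⟩

lemma isProbabilityMeasure [IsProbabilityMeasure μ] (hπ : IsCoupling π μ ν) :
    IsProbabilityMeasure π :=
  ⟨by rw [hπ.measure_univ_eq, measure_univ]⟩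

lemma add (hπ : IsCoupling π μ ν) (hπ' : IsCoupling π' μ' ν') :
    IsCoupling (π + π') (μ + μ') (ν + ν') :=
  ⟨by rw [Measure.map_add _ _ measurable_fst, hπ.1, hπ'.1],
    by rw [Measure.map_add _ _ measurable_snd, hπ.2, hπ'.2]⟩

lemma measure_le_add (hπ : IsCoupling π μ ν) {A : Set X} (hA : MeasurableSet A)
    (Γ : Set (X × Y)) : μ A ≤ π Γ + ν (SetRel.image Γᶜ A) :=
  calc μ A = π (Prod.fst ⁻¹' A) := (hπ.measure_preimage_fst hA).symm
    _ ≤ π (Γ ∪ Prod.snd ⁻¹' SetRel.image Γᶜ A) := measure_mono fun p hp ↦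
      (em (p ∈ Γ)).imp_right fun hpΓ ↦ ⟨p.1, hp, hpΓ⟩
    _ ≤ π Γ + ν (SetRel.image Γᶜ A) :=
      (measure_union_le _ _).trans (by gcongr; exact hπ.measure_preimage_snd_le _)

lemma measureReal_sub_le [IsFiniteMeasure μ] [IsFiniteMeasure ν] (hπ : IsCoupling π μ ν)
    {A : Set X} (hA : MeasurableSet A) (Γ : Set (X × Y)) :
    μ.real A - ν.real (SetRel.image Γᶜ A) ≤ π.real Γ := by
  have := hπ.isFiniteMeasure
  have hle := ENNReal.toReal_mono (by finiteness) (hπ.measure_le_add hA Γ)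
  rw [ENNReal.toReal_add (by finiteness) (by finiteness)] at hle
  exact sub_le_iff_le_add.2 hle

end IsCoupling

section Marginals

variable {X Y : Type*} [MeasurableSpace X] [MeasurableSpace Y] {μ : Measure X} {ν : Measure Y}
  [IsFiniteMeasure μ] [IsFiniteMeasure ν]

lemma isCoupling_inv_smul_prod (hμν : μ univ = ν univ) :
    IsCoupling ((μ univ)⁻¹ • μ.prod ν) μ ν := by
  rcases eq_or_ne (μ univ) 0 with h0 | h0
  · obtain rfl := Measure.measure_univ_eq_zero.1 h0
    obtain rfl := Measure.measure_univ_eq_zero.1 (hμν ▸ h0)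
    simp [IsCoupling]
  · have h : (μ univ)⁻¹ * μ univ = 1 := ENNReal.inv_mul_cancel h0 (measure_ne_top μ univ)
    constructor
    · rw [Measure.map_smul, Measure.map_fst_prod, smul_smul, ← hμν, h, one_smul]
    · rw [Measure.map_smul, Measure.map_snd_prod, smul_smul, h, one_smul]

lemma exists_isCoupling_ge (hμν : μ univ = ν univ) {ρ : Measure (X × Y)}
    (hρμ : ρ.map Prod.fst ≤ μ) (hρν : ρ.map Prod.snd ≤ ν) : ∃ π, IsCoupling π μ ν ∧ ρ ≤ π := by
  have : IsFiniteMeasure (ρ.map Prod.fst) := isFiniteMeasure_of_le μ hρμ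
  have : IsFiniteMeasure (ρ.map Prod.snd) := isFiniteMeasure_of_le ν hρν
  have hrest : (μ - ρ.map Prod.fst) univ = (ν - ρ.map Prod.snd) univ := by
    rw [Measure.sub_apply .univ hρμ, Measure.sub_apply .univ hρν, hμν,
      Measure.map_apply measurable_fst .univ, Measure.map_apply measurable_snd .univ,
      preimage_univ, preimage_univ]
  have hρ : IsCoupling ρ (ρ.map Prod.fst) (ρ.map Prod.snd) := ⟨rfl, rfl⟩
  have hπ := (isCoupling_inv_smul_prod hrest).add hρ
  rw [Measure.sub_add_cancel_of_le hρμ, Measure.sub_add_cancel_of_le hρν] at hπ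
  exact ⟨_, hπ, Measure.le_add_left le_rfl⟩

end Marginals

section Gluing

variable {X Y ι κ : Type*} [MeasurableSpace X] [MeasurableSpace Y] [Fintype ι] [Fintype κ]

/-- The measure on `X × Y` which puts mass `c i j` on each rectangle `f ⁻¹' {i} ×ˢ g ⁻¹' {j}`,
distributed there as the product of the conditional measures of `μ` and `ν`. Mass attributed to a
rectangle with a null side is lost. -/
noncomputable def gluedMeasure (μ : Measure X) (ν : Measure Y) (f : X → ι) (g : Y → κ)
    (c : ι → κ → ℝ≥0∞) : Measure (X × Y) :=
  ∑ i, ∑ j, c i j • (μ[|f ← i]).prod (ν[|g ← j])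

variable {μ : Measure X} {ν : Measure Y} {f : X → ι} {g : Y → κ} {c : ι → κ → ℝ≥0∞}

lemma map_swap_gluedMeasure [SFinite μ] [SFinite ν] :
    (gluedMeasure μ ν f g c).map Prod.swap = gluedMeasure ν μ g f (Function.swap c) := by
  simp only [gluedMeasure, Measure.map_finset_sum' measurable_swap.aemeasurable, Measure.map_smul,
    Measure.prod_swap]
  exact Finset.sum_comm

lemma map_fst_gluedMeasure_le [MeasurableSpace ι] [DiscreteMeasurableSpace ι] [IsFiniteMeasure μ]
    (hf : Measurable f) (hc : ∀ i, ∑ j, c i j ≤ μ (f ⁻¹' {i})) :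
    (gluedMeasure μ ν f g c).map Prod.fst ≤ μ := by
  simp only [gluedMeasure, Measure.map_finset_sum' measurable_fst.aemeasurable, Measure.map_smul,
    Measure.map_fst_prod]
  calc ∑ i, ∑ j, c i j • ν[|g ← j] univ • μ[|f ← i]
      ≤ ∑ i, ∑ j, c i j • (1 : ℝ≥0∞) • μ[|f ← i] := by
        gcongr with i _ j
        exact prob_le_one
    _ ≤ ∑ i, μ (f ⁻¹' {i}) • μ[|f ← i] := by
        simp only [one_smul, ← Finset.sum_smul]
        gcongr with i
        exact hc i
    _ = μ := sum_meas_smul_cond_fiber hf μ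

lemma map_snd_gluedMeasure_le [MeasurableSpace κ] [DiscreteMeasurableSpace κ] [SFinite μ]
    [IsFiniteMeasure ν] (hg : Measurable g) (hc : ∀ j, ∑ i, c i j ≤ ν (g ⁻¹' {j})) :
    (gluedMeasure μ ν f g c).map Prod.snd ≤ ν := by
  calc (gluedMeasure μ ν f g c).map Prod.snd
      = ((gluedMeasure μ ν f g c).map Prod.swap).map Prod.fst :=
        (Measure.map_map measurable_fst measurable_swap).symm
    _ = (gluedMeasure ν μ g f (Function.swap c)).map Prod.fst := by rw [map_swap_gluedMeasure]
    _ ≤ ν := map_fst_gluedMeasure_le hg hc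

lemma sum_le_gluedMeasure_preimage [IsFiniteMeasure μ] [IsFiniteMeasure ν] {R : SetRel ι κ}
    (hc : IsPartialPlan R (fun i ↦ μ (f ⁻¹' {i})) (fun j ↦ ν (g ⁻¹' {j})) c) :
    ∑ i, ∑ j, c i j ≤ gluedMeasure μ ν f g c (Prod.map f g ⁻¹' R) := by
  simp only [gluedMeasure, Measure.coe_finsetSum, Finset.sum_apply, Measure.smul_apply,
    smul_eq_mul]
  gcongr with i _ j _
  rcases eq_or_ne (c i j) 0 with hij | hij
  · simp [hij]
  have hi : μ (f ⁻¹' {i}) ≠ 0 := ne_bot_of_le_ne_bot hij <|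
    (Finset.single_le_sum (fun _ _ ↦ zero_le) (Finset.mem_univ j)).trans (hc.sum_row_le i)
  have hj : ν (g ⁻¹' {j}) ≠ 0 := ne_bot_of_le_ne_bot hij <|
    (Finset.single_le_sum (f := fun i ↦ c i j) (fun _ _ ↦ zero_le) (Finset.mem_univ i)).trans
      (hc.sum_col_le j)
  have hR : (f ⁻¹' {i}) ×ˢ (g ⁻¹' {j}) ⊆ Prod.map f g ⁻¹' R := by
    rintro ⟨x, y⟩ ⟨rfl, rfl⟩
    exact hc.mem_of_ne_zero _ _ hij
  calc c i j = c i j * (μ[|f ← i]).prod (ν[|g ← j]) ((f ⁻¹' {i}) ×ˢ (g ⁻¹' {j})) := by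
        rw [Measure.prod_prod, cond_apply_self hi (measure_ne_top _ _),
          cond_apply_self hj (measure_ne_top _ _), one_mul, mul_one]
    _ ≤ c i j * (μ[|f ← i]).prod (ν[|g ← j]) (Prod.map f g ⁻¹' R) := by gcongr

end Gluing

lemma exists_isCoupling_of_measure_preimage_le {X Y ι κ : Type*} [MeasurableSpace X]
    [MeasurableSpace Y] [Finite ι] [Finite κ] [MeasurableSpace ι] [DiscreteMeasurableSpace ι]
    [MeasurableSpace κ] [DiscreteMeasurableSpace κ] {μ : Measure X} {ν : Measure Y}
    [IsFiniteMeasure μ] [IsFiniteMeasure ν] (hμν : μ univ = ν univ) {f : X → ι} (hf : Measurable f)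
    {g : Y → κ} (hg : Measurable g) {R : SetRel ι κ} {s : ℝ≥0}
    (h : ∀ I : Set ι, μ (f ⁻¹' I) ≤ ν (g ⁻¹' R.image I) + s) {ε : ℝ≥0} (hε : 0 < ε) :
    ∃ π, IsCoupling π μ ν ∧ μ univ ≤ π (Prod.map f g ⁻¹' R) + s + ε := by
  classical
  have := Fintype.ofFinite ι
  have := Fintype.ofFinite κ
  let p : ι → ℝ≥0 := fun i ↦ (μ (f ⁻¹' {i})).toNNReal
  let q : κ → ℝ≥0 := fun j ↦ (ν (g ⁻¹' {j})).toNNReal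
  have hp (i : ι) : (p i : ℝ≥0∞) = μ (f ⁻¹' {i}) := ENNReal.coe_toNNReal (measure_ne_top _ _)
  have hq (j : κ) : (q j : ℝ≥0∞) = ν (g ⁻¹' {j}) := ENNReal.coe_toNNReal (measure_ne_top _ _)
  have sum_p (I : Finset ι) : ((∑ i ∈ I, p i : ℝ≥0) : ℝ≥0∞) = μ (f ⁻¹' I) := by
    push_cast [hp]
    exact sum_measure_preimage_singleton I fun i _ ↦ hf (.singleton i)
  have sum_q (J : Finset κ) : ((∑ j ∈ J, q j : ℝ≥0) : ℝ≥0∞) = ν (g ⁻¹' J) := by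
    push_cast [hq]
    exact sum_measure_preimage_singleton J fun j _ ↦ hg (.singleton j)
  obtain ⟨c, hc, hsum⟩ := exists_isPartialPlan_nnreal (R := R) p q s (fun I ↦ by
    refine ⟨(R.image I).toFinset, by simp, ?_⟩
    rw [← ENNReal.coe_le_coe, ENNReal.coe_add, sum_p, sum_q, coe_toFinset]
    exact h I) hε
  have hc : IsPartialPlan R (fun i ↦ μ (f ⁻¹' {i})) (fun j ↦ ν (g ⁻¹' {j}))
      fun i j ↦ (c i j : ℝ≥0∞) := by
    simpa [hp, hq] using hc.map ENNReal.ofNNRealHom.toAddMonoidHom ENNReal.coe_mono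
  obtain ⟨π, hπ, hρπ⟩ := exists_isCoupling_ge hμν (map_fst_gluedMeasure_le hf hc.sum_row_le)
    (map_snd_gluedMeasure_le hg hc.sum_col_le)
  refine ⟨π, hπ, ?_⟩
  calc μ univ = ((∑ i, p i : ℝ≥0) : ℝ≥0∞) := by rw [sum_p, Finset.coe_univ, preimage_univ]
    _ ≤ ∑ i, ∑ j, (c i j : ℝ≥0∞) + s + ε := by exact_mod_cast hsum
    _ ≤ π (Prod.map f g ⁻¹' R) + s + ε := by
      gcongr
      exact (sum_le_gluedMeasure_preimage hc).trans (hρπ _)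

lemma exists_isCoupling_of_simpleFunc {X Y ι κ : Type*} [MeasurableSpace X] [MeasurableSpace Y]
    {μ : Measure X} {ν : Measure Y} [IsFiniteMeasure μ] [IsFiniteMeasure ν]
    (hμν : μ univ = ν univ) (f : SimpleFunc X ι) (g : SimpleFunc Y κ) {R : SetRel ι κ} {s : ℝ≥0}
    (h : ∀ I : Set ι, I.Finite → μ (f ⁻¹' I) ≤ ν (g ⁻¹' R.image I) + s) {ε : ℝ≥0} (hε : 0 < ε) :
    ∃ π, IsCoupling π μ ν ∧ μ univ ≤ π (Prod.map f g ⁻¹' R) + s + ε := by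
  let _ : MeasurableSpace f.range := ⊤
  let _ : MeasurableSpace g.range := ⊤
  let f' : X → f.range := fun x ↦ ⟨f x, f.mem_range_self x⟩
  let g' : Y → g.range := fun y ↦ ⟨g y, g.mem_range_self y⟩
  have hf' : Measurable f' := fun I _ ↦ by
    rw [← preimage_image_eq I Subtype.val_injective]
    exact f.measurableSet_preimage _
  have hg' : Measurable g' := fun J _ ↦ by
    rw [← preimage_image_eq J Subtype.val_injective]
    exact g.measurableSet_preimage _
  let R' : SetRel f.range g.range := {p | (p.1.1, p.2.1) ∈ R}
  refine exists_isCoupling_of_measure_preimage_le (R := R') hμν hf' hg' (fun I ↦ ?_) hε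
  calc μ (f' ⁻¹' I) ≤ μ (f ⁻¹' (Subtype.val '' I)) := by
        gcongr
        exact fun x hx ↦ ⟨f' x, hx, rfl⟩
    _ ≤ ν (g ⁻¹' R.image (Subtype.val '' I)) + s := h _ (I.toFinite.image _)
    _ ≤ ν (g' ⁻¹' R'.image I) + s := by
        gcongr
        rintro y ⟨_, ⟨i, hi, rfl⟩, hiR⟩
        exact ⟨i, hi, hiR⟩

lemma exists_simpleFunc_measure_le_dist_le {X : Type*} [PseudoMetricSpace X]
    [TopologicalSpace.SeparableSpace X] [MeasurableSpace X] [OpensMeasurableSpace X]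
    (μ : Measure X) [IsFiniteMeasure μ] {δ : ℝ} (hδ : 0 < δ) {ε : ℝ≥0∞} (hε : 0 < ε) :
    ∃ f : SimpleFunc X X, μ {x | δ ≤ dist (f x) x} ≤ ε := by
  cases isEmpty_or_nonempty X
  · exact ⟨.ofIsEmpty, by simp [Measure.eq_zero_of_isEmpty μ]⟩
  let f (N : ℕ) := SimpleFunc.nearestPt (TopologicalSpace.denseSeq X) N
  have hlim (x : X) : Tendsto (fun N ↦ f N x) atTop (𝓝 x) :=
    SimpleFunc.tendsto_nearestPt (TopologicalSpace.denseRange_denseSeq X x)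
  have hmeas : TendstoInMeasure μ (fun N ↦ f N) atTop id :=
    tendstoInMeasure_of_tendsto_ae (fun N ↦ (f N).aestronglyMeasurable) (.of_forall hlim)
  obtain ⟨N, hN⟩ := ((tendstoInMeasure_iff_dist.1 hmeas δ hδ).eventually_le_const hε).exists
  exact ⟨f N, hN⟩

section Thickening

variable {X Y : Type*} [PseudoMetricSpace X] [PseudoMetricSpace Y] [MeasurableSpace X]
  [MeasurableSpace Y] {μ : Measure X} {ν : Measure Y}

lemma measure_preimage_le_preimage_image_thickening {F : SetRel X Y} {s : ℝ≥0}
    (h : ∀ A, IsClosed A → μ A ≤ ν (F.image A) + s) (f : X → X) (g : Y → Y) {η : ℝ} (hη : 0 < η)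
    {I : Set X} (hI : I.Finite) :
    μ (f ⁻¹' I) ≤ ν (g ⁻¹' SetRel.image (Metric.thickening (2 * η) F) I) + s
      + μ {x | η ≤ dist (f x) x} + ν {y | η ≤ dist (g y) y} := by
  let A : Set X := ⋃ i ∈ I, Metric.closedBall i η
  have hA : IsClosed A := hI.isClosed_biUnion fun _ _ ↦ Metric.isClosed_closedBall
  have preimage_subset : f ⁻¹' I ⊆ A ∪ {x | η ≤ dist (f x) x} := fun x hx ↦
    (le_total (dist x (f x)) η).imp (fun hd ↦ mem_biUnion hx hd) fun hd ↦ by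
      rwa [mem_ofPred_eq, dist_comm]
  have image_subset : F.image A ⊆
      g ⁻¹' SetRel.image (Metric.thickening (2 * η) F) I ∪ {y | η ≤ dist (g y) y} := by
    rintro y ⟨x, hxA, hxy⟩
    obtain ⟨i, hi, hxi⟩ := mem_iUnion₂.1 hxA
    refine (lt_or_ge (dist (g y) y) η).imp (fun hd ↦ ⟨i, hi, ?_⟩) id
    refine Metric.mem_thickening_iff.2 ⟨(x, y), hxy, ?_⟩
    calc dist (i, g y) (x, y) ≤ η := max_le (Metric.mem_closedBall'.1 hxi) hd.le
      _ < 2 * η := by linarith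
  calc μ (f ⁻¹' I) ≤ μ A + μ {x | η ≤ dist (f x) x} :=
        (measure_mono preimage_subset).trans (measure_union_le _ _)
    _ ≤ ν (F.image A) + s + μ {x | η ≤ dist (f x) x} := by gcongr; exact h A hA
    _ ≤ ν (g ⁻¹' SetRel.image (Metric.thickening (2 * η) F) I) + ν {y | η ≤ dist (g y) y} + s
          + μ {x | η ≤ dist (f x) x} := by
        gcongr
        exact (measure_mono image_subset).trans (measure_union_le _ _)
    _ = _ := by ring

lemma IsCoupling.measure_preimage_thickening_le {π : Measure (X × Y)} (hπ : IsCoupling π μ ν)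
    (f : X → X) (g : Y → Y) (F : Set (X × Y)) (η θ : ℝ) :
    π (Prod.map f g ⁻¹' Metric.thickening θ F) ≤
      π (Metric.thickening (η + θ) F) + μ {x | η ≤ dist (f x) x} + ν {y | η ≤ dist (g y) y} := by
  have hsub : Prod.map f g ⁻¹' Metric.thickening θ F ⊆ Metric.thickening (η + θ) F ∪
      Prod.fst ⁻¹' {x | η ≤ dist (f x) x} ∪ Prod.snd ⁻¹' {y | η ≤ dist (g y) y} := by
    rintro ⟨x, y⟩ hxy
    rcases le_or_gt η (dist (f x) x) with hx | hx
    · exact .inl (.inr hx)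
    rcases le_or_gt η (dist (g y) y) with hy | hy
    · exact .inr hy
    obtain ⟨z, hz, hd⟩ := Metric.mem_thickening_iff.1 hxy
    refine .inl (.inl (Metric.mem_thickening_iff.2 ⟨z, hz, ?_⟩))
    calc dist (x, y) z ≤ dist (f x, g y) (x, y) + dist (f x, g y) z := dist_triangle_left _ _ _
      _ < η + θ := add_lt_add (max_lt hx hy) hd
  refine (measure_mono hsub).trans ((measure_union_le _ _).trans ?_)
  gcongr
  · refine (measure_union_le _ _).trans ?_
    gcongr
    exact hπ.measure_preimage_fst_le _
  · exact hπ.measure_preimage_snd_le _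

lemma exists_isCoupling_cthickening [OpensMeasurableSpace X] [OpensMeasurableSpace Y]
    [TopologicalSpace.SeparableSpace X] [TopologicalSpace.SeparableSpace Y] [IsFiniteMeasure μ]
    [IsFiniteMeasure ν] (hμν : μ univ = ν univ) {F : SetRel X Y} {s : ℝ≥0}
    (h : ∀ A, IsClosed A → μ A ≤ ν (F.image A) + s) {δ : ℝ≥0} (hδ : 0 < δ) :
    ∃ π, IsCoupling π μ ν ∧ μ univ ≤ π (Metric.cthickening δ F) + s + δ := by
  obtain ⟨η, hη, rfl⟩ : ∃ η : ℝ≥0, 0 < η ∧ δ = 5 * η := ⟨δ / 5, by positivity, by field_simp⟩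
  have hη' : (0 : ℝ≥0∞) < η := by exact_mod_cast hη
  obtain ⟨f, hf⟩ := exists_simpleFunc_measure_le_dist_le μ (NNReal.coe_pos.2 hη) hη'
  obtain ⟨g, hg⟩ := exists_simpleFunc_measure_le_dist_le ν (NNReal.coe_pos.2 hη) hη'
  let R : SetRel X Y := Metric.thickening (2 * η) F
  obtain ⟨π, hπ, hπR⟩ := exists_isCoupling_of_simpleFunc hμν f g (R := R) (s := s + η + η)
    (fun I hI ↦ by
      calc μ (f ⁻¹' I) ≤ ν (g ⁻¹' R.image I) + s + η + η :=
            (measure_preimage_le_preimage_image_thickening h f g hη hI).trans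
              (add_le_add (add_le_add le_rfl hf) hg)
        _ = ν (g ⁻¹' R.image I) + (s + η + η : ℝ≥0) := by push_cast; ring) hη
  refine ⟨π, hπ, ?_⟩
  calc μ univ ≤ π (Prod.map f g ⁻¹' R) + (s + η + η : ℝ≥0) + η := hπR
    _ ≤ π (Metric.thickening (η + 2 * η) F) + η + η + (s + η + η : ℝ≥0) + η := by
      gcongr
      exact (hπ.measure_preimage_thickening_le f g F η (2 * η)).trans (by gcongr)
    _ ≤ π (Metric.cthickening (5 * η : ℝ≥0) F) + η + η + (s + η + η : ℝ≥0) + η := by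
      gcongr
      exact Metric.thickening_subset_cthickening_of_le (by push_cast; linarith [η.coe_nonneg]) F
    _ = π (Metric.cthickening (5 * η : ℝ≥0) F) + s + (5 * η : ℝ≥0) := by
      push_cast
      ring

end Thickening

section Compactness

lemma isClosed_setOf_le_measure {Ω : Type*} [TopologicalSpace Ω] [MeasurableSpace Ω]
    [OpensMeasurableSpace Ω] [HasOuterApproxClosed Ω] (c : ℝ≥0∞) {C : Set Ω} (hC : IsClosed C) :
    IsClosed {π : ProbabilityMeasure Ω | c ≤ (π : Measure Ω) C} := by
  refine isClosed_iff_forall_filter.2 fun π L _ hL hLπ ↦ ?_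
  have hle : ∀ᶠ π' : ProbabilityMeasure Ω in L, c ≤ (π' : Measure Ω) C := le_principal_iff.1 hL
  exact (le_limsup_of_frequently_le hle.frequently).trans
    (ProbabilityMeasure.limsup_measure_closed_le_of_tendsto (μs := id) hLπ hC)

lemma exists_mem_le_measure_of_forall_cthickening {Ω : Type*} [PseudoMetricSpace Ω]
    [MeasurableSpace Ω] [BorelSpace Ω] {K : Set (ProbabilityMeasure Ω)}
    (hK : IsCompact K) {F : Set Ω} (hF : IsClosed F) {c : ℝ≥0∞}
    (h : ∀ δ : ℝ≥0, 0 < δ → ∃ π ∈ K, c ≤ (π : Measure Ω) (Metric.cthickening δ F) + δ) :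
    ∃ π ∈ K, c ≤ (π : Measure Ω) F := by
  obtain ⟨u, hu, hu0, hu_lim⟩ := exists_seq_strictAnti_tendsto (0 : ℝ≥0)
  let S (n : ℕ) : Set (ProbabilityMeasure Ω) :=
    {π | c ≤ (π : Measure Ω) (Metric.cthickening (u n) F) + u n}
  have hSc (n : ℕ) : IsClosed (S n) := by
    simpa only [S, ← tsub_le_iff_right] using
      isClosed_setOf_le_measure (c - u n) Metric.isClosed_cthickening
  have hS (n : ℕ) : S (n + 1) ⊆ S n := fun π hπ ↦
    have hle : u (n + 1) ≤ u n := (hu n.lt_succ_self).le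
    le_trans hπ <|
      add_le_add (measure_mono (Metric.cthickening_mono hle F)) (ENNReal.coe_le_coe.2 hle)
  obtain ⟨π, hπ⟩ := IsCompact.nonempty_iInter_of_sequence_nonempty_isCompact_isClosed
    (fun n ↦ K ∩ S n) (fun n ↦ inter_subset_inter_right K (hS n)) (fun n ↦ h (u n) (hu0 n))
    (hK.inter_right (hSc 0)) (fun n ↦ hK.isClosed.inter (hSc n))
  rw [mem_iInter] at hπ
  refine ⟨π, (hπ 0).1, ge_of_tendsto' (x := atTop) ?_ fun n ↦ (hπ n).2⟩
  have hmeasure : Tendsto (fun n ↦ (π : Measure Ω) (Metric.cthickening (u n) F)) atTop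
      (𝓝 ((π : Measure Ω) F)) :=
    (tendsto_measure_cthickening_of_isClosed ⟨1, one_pos, measure_ne_top _ _⟩ hF).comp
      (NNReal.tendsto_coe.2 hu_lim)
  simpa using hmeasure.add (ENNReal.tendsto_coe.2 hu_lim)

variable {X Y : Type*} [TopologicalSpace X] [TopologicalSpace Y] [MeasurableSpace X]
  [MeasurableSpace Y]

lemma isTightMeasureSet_setOf_isCoupling {μ : Measure X} {ν : Measure Y}
    (hμ : IsTightMeasureSet {μ}) (hν : IsTightMeasureSet {ν}) :
    IsTightMeasureSet {π | IsCoupling π μ ν} :=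
  .prodMk (hμ.subset (image_subset_iff.2 fun _ hπ ↦ hπ.1))
    (hν.subset (image_subset_iff.2 fun _ hπ ↦ hπ.2))

variable [BorelSpace X] [BorelSpace Y] [SecondCountableTopologyEither X Y]
  {μ : Measure X} {ν : Measure Y}

lemma isClosed_setOf_isCoupling [HasOuterApproxClosed X] [HasOuterApproxClosed Y]
    [IsProbabilityMeasure μ] [IsProbabilityMeasure ν] :
    IsClosed {π : ProbabilityMeasure (X × Y) | IsCoupling (π : Measure (X × Y)) μ ν} := by
  let μ' : ProbabilityMeasure X := ⟨μ, inferInstance⟩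
  let ν' : ProbabilityMeasure Y := ⟨ν, inferInstance⟩
  have hcoupling (π : ProbabilityMeasure (X × Y)) : IsCoupling (π : Measure (X × Y)) μ ν ↔
      π.map measurable_fst.aemeasurable = μ' ∧ π.map measurable_snd.aemeasurable = ν' :=
    ⟨fun h ↦ ⟨Subtype.ext h.1, Subtype.ext h.2⟩,
      fun h ↦ ⟨congrArg Subtype.val h.1, congrArg Subtype.val h.2⟩⟩
  simp only [hcoupling]
  exact (isClosed_eq (ProbabilityMeasure.continuous_map continuous_fst) continuous_const).inter
    (isClosed_eq (ProbabilityMeasure.continuous_map continuous_snd) continuous_const)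

lemma isCompact_setOf_isCoupling [HasOuterApproxClosed X] [HasOuterApproxClosed Y] [T2Space X]
    [T2Space Y] [IsProbabilityMeasure μ] [IsProbabilityMeasure ν]
    (hμ : IsTightMeasureSet {μ}) (hν : IsTightMeasureSet {ν}) :
    IsCompact {π : ProbabilityMeasure (X × Y) | IsCoupling (π : Measure (X × Y)) μ ν} := by
  rw [← isClosed_setOf_isCoupling.closure_eq]
  exact isCompact_closure_of_isTightMeasureSet <|
    (isTightMeasureSet_setOf_isCoupling hμ hν).subset (by rintro _ ⟨π, hπ, rfl⟩; exact hπ)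

end Compactness

lemma exists_isCoupling_measureReal_le {X Y : Type*} [TopologicalSpace X]
    [TopologicalSpace.MetrizableSpace X] [SecondCountableTopology X] [MeasurableSpace X]
    [BorelSpace X] [TopologicalSpace Y] [TopologicalSpace.MetrizableSpace Y]
    [SecondCountableTopology Y] [MeasurableSpace Y] [BorelSpace Y] {μ : Measure X} {ν : Measure Y}
    [IsProbabilityMeasure μ] [IsProbabilityMeasure ν] (hμ : IsTightMeasureSet {μ})
    (hν : IsTightMeasureSet {ν}) {Γ : Set (X × Y)} (hΓ : IsOpen Γ) {s : ℝ}
    (h : ∀ A, IsClosed A → μ.real A - ν.real (SetRel.image Γᶜ A) ≤ s) :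
    ∃ π, IsCoupling π μ ν ∧ π.real Γ ≤ s := by
  let _ := TopologicalSpace.metrizableSpaceMetric X
  let _ := TopologicalSpace.metrizableSpaceMetric Y
  lift s to ℝ≥0 using by simpa using h ∅ isClosed_empty
  have hmeasure (A : Set X) (hA : IsClosed A) : μ A ≤ ν (SetRel.image Γᶜ A) + s := by
    rw [← ENNReal.toReal_le_toReal (by finiteness) (by finiteness),
      ENNReal.toReal_add (by finiteness) (by finiteness)]
    exact sub_le_iff_le_add'.1 (h A hA)
  obtain ⟨π, hπ, hπΓ⟩ := exists_mem_le_measure_of_forall_cthickening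
    (isCompact_setOf_isCoupling hμ hν) hΓ.isClosed_compl (c := 1 - s) fun δ hδ ↦ by
      obtain ⟨π, hπ, hπδ⟩ := exists_isCoupling_cthickening (by simp) hmeasure hδ
      refine ⟨⟨π, hπ.isProbabilityMeasure⟩, hπ, tsub_le_iff_right.2 ?_⟩
      rwa [add_right_comm, ← measure_univ (μ := μ)]
  refine ⟨π, hπ, ?_⟩
  have hreal : 1 ≤ (π : Measure (X × Y)).real Γᶜ + s := by
    have := ENNReal.toReal_mono (by finiteness) (tsub_le_iff_right.1 hπΓ)
    rwa [ENNReal.toReal_one, ENNReal.toReal_add (by finiteness) (by finiteness)] at this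
  linarith [probReal_compl_eq_one_sub (μ := (π : Measure (X × Y))) hΓ.measurableSet]

theorem binary_cost_duality_general {X Y : Type*} [TopologicalSpace X]
    [TopologicalSpace.MetrizableSpace X] [SecondCountableTopology X] [MeasurableSpace X]
    [BorelSpace X] [TopologicalSpace Y] [TopologicalSpace.MetrizableSpace Y]
    [SecondCountableTopology Y] [MeasurableSpace Y] [BorelSpace Y] (μ : Measure X) (ν : Measure Y)
    [IsProbabilityMeasure μ] [IsProbabilityMeasure ν] (hμ : IsTightMeasureSet {μ})
    (hν : IsTightMeasureSet {ν}) (Γ : Set (X × Y)) (hΓ : IsOpen Γ) :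
    sInf {r : ℝ | ∃ π : Measure (X × Y), IsCoupling π μ ν ∧ r = (π Γ).toReal}
      = sSup {r : ℝ | ∃ A : Set X, IsClosed A ∧
          r = (μ A).toReal - (ν {y : Y | ∃ x ∈ A, (x, y) ∉ Γ}).toReal} := by
  apply le_antisymm
  · have hbdd : BddAbove {r : ℝ | ∃ A : Set X, IsClosed A ∧
        r = μ.real A - ν.real (SetRel.image Γᶜ A)} :=
      ⟨1, by
        rintro _ ⟨A, -, rfl⟩
        exact (sub_le_self _ measureReal_nonneg).trans measureReal_le_one⟩
    obtain ⟨π, hπ, hπΓ⟩ := exists_isCoupling_measureReal_le hμ hν hΓ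
      fun A hA ↦ le_csSup hbdd ⟨A, hA, rfl⟩
    exact csInf_le_of_le ⟨0, by rintro _ ⟨π, -, rfl⟩; exact measureReal_nonneg⟩ ⟨π, hπ, rfl⟩ hπΓ
  · refine csSup_le ⟨_, ∅, isClosed_empty, rfl⟩ ?_
    rintro _ ⟨A, hA, rfl⟩
    refine le_csInf ⟨_, _, isCoupling_inv_smul_prod (by simp), rfl⟩ ?_
    rintro _ ⟨π, hπ, rfl⟩
    exact hπ.measureReal_sub_le hA.measurableSet Γ

/-- Optimal transport with binary cost (Strassen-type duality): for a non-empty open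
`Γ ⊆ X × Y`, the minimal mass a coupling puts on `Γ` equals the supremum over closed sets
`A ⊆ X` of `μ(A) − ν(A^Γ)`, where `A^Γ = { y : ∃ x ∈ A, (x,y) ∉ Γ }`. -/
theorem binary_cost_duality
    {X Y : Type*}
    [MeasurableSpace X] [TopologicalSpace X] [PolishSpace X] [BorelSpace X]
    [MeasurableSpace Y] [TopologicalSpace Y] [PolishSpace Y] [BorelSpace Y]
    (μ : Measure X) (ν : Measure Y) [IsProbabilityMeasure μ] [IsProbabilityMeasure ν]
    (Γ : Set (X × Y)) (hΓo : IsOpen Γ) (hΓne : Γ.Nonempty) :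
    sInf {r : ℝ | ∃ π : Measure (X × Y), IsCoupling π μ ν ∧ r = (π Γ).toReal}
      = sSup {r : ℝ | ∃ A : Set X, IsClosed A ∧
          r = (μ A).toReal - (ν {y : Y | ∃ x ∈ A, (x, y) ∉ Γ}).toReal} :=
  binary_cost_duality_general μ ν isTightMeasureSet_singleton isTightMeasureSet_singleton Γ hΓo
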